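/- arXiv:1903.05878 — 6 statements merged into one kernel-verified Lean document; each statement's English description precedes it below -/
import Mathlib

section
/- (Predecessor Lemma for Game Paths) If U is a path from a game position u₀, then every v ∈ U with u₀ ⊏ v has an immediate predecessor in U: there exists u ∈ U with gsucc u v. -/
namespace TreeGames

variable {D P O : Type*}

/-- Strict prefix order on tree positions `x < y`. -/
def TLt (x y : List D) : Prop := x <+: y ∧ x ≠ y

/-- The relation `u ⊏ v` on game positions. -/
def Glt (u v : List D × (P ⊕ O)) : Prop :=
  TLt u.1 v.1 ∨ (u.1 = v.1 ∧ (∃ k, u.2 = Sum.inl k) ∧ (∃ l, v.2 = Sum.inr l))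

/-- The relation `u ⊑ v` on game positions. -/
def Gle (u v : List D × (P ⊕ O)) : Prop := Glt u v ∨ u = v

/-- `v` is an immediate successor of `u`. -/
def Gsucc (u v : List D × (P ⊕ O)) : Prop :=
  Glt u v ∧ ¬ ∃ w : List D × (P ⊕ O), Glt u w ∧ Glt w v

/-- `U` is a path from `u₀`. -/
def IsPath (u₀ : List D × (P ⊕ O)) (U : Set (List D × (P ⊕ O))) : Prop :=
  u₀ ∈ U ∧ (∀ v ∈ U, Gle u₀ v) ∧ (∀ v ∈ U, ∃ w ∈ U, Gsucc v w) ∧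
  (∀ v ∈ U, ∀ w ∈ U, Glt v w ∨ v = w ∨ Glt w v)

/-!
Choose a `⊏`-maximal `u` among the elements of `U` below `v`; it exists because an `ℕ`-valued rank
strictly increases along `⊏`, which bounds ascending chains below `v`. The successor of `u` in `U`
is comparable with `v`: it is not below `v` by maximality, and not above `v` since then `v` would
lie strictly between `u` and its immediate successor. Hence it is `v`.
-/

theorem exists_mem_immediate_predecessor {α : Type*} {r : α → α → Prop} {U : Set α} {v : α}
    (wellFounded_below : {u | r u v}.WellFoundedOn (Function.swap r))
    (exists_succ : ∀ u ∈ U, ∃ w ∈ U, r u w ∧ ¬ ∃ x, r u x ∧ r x w)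
    (comparable : ∀ w ∈ U, r w v ∨ w = v ∨ r v w) (nonempty_below : ∃ u ∈ U, r u v) :
    ∃ u ∈ U, r u v ∧ ¬ ∃ x, r u x ∧ r x v := by
  obtain ⟨u₀, hu₀, hu₀v⟩ := nonempty_below
  obtain ⟨⟨u, huv⟩, hu, u_maximal⟩ :=
    wellFounded_below.has_min {u | u.1 ∈ U} ⟨⟨u₀, hu₀v⟩, hu₀⟩
  obtain ⟨w, hw, huw, not_between⟩ := exists_succ u hu
  rcases comparable w hw with hwv | rfl | hvw
  · exact absurd huw (u_maximal ⟨w, hwv⟩ hw)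
  · exact ⟨u, hu, huw, not_between⟩
  · exact absurd ⟨v, huv, hvw⟩ not_between

theorem TLt.length_lt {x y : List D} (h : TLt x y) : x.length < y.length :=
  h.1.length_le.lt_of_ne fun hlen => h.2 (h.1.eq_of_length hlen)

/-- The layer of a game position, bounding the length of `⊏`-chains below it: each tree level
contributes a layer of Proponent positions followed by a layer of Opponent positions. -/
def rank (u : List D × (P ⊕ O)) : ℕ :=
  2 * u.1.length + Sum.elim (fun _ => 0) (fun _ => 1) u.2

theorem Glt.rank_lt {u v : List D × (P ⊕ O)} (h : Glt u v) : rank u < rank v := by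
  obtain ⟨x, a⟩ := u
  obtain ⟨y, b⟩ := v
  rcases h with hxy | ⟨rfl, ⟨k, rfl⟩, ⟨l, rfl⟩⟩
  · have hlen : x.length < y.length := hxy.length_lt
    cases a <;> cases b <;> simp only [rank, Sum.elim_inl, Sum.elim_inr] <;> omega
  · simp [rank]

theorem wellFoundedOn_swap_glt (v : List D × (P ⊕ O)) :
    {u | Glt u v}.WellFoundedOn (Function.swap Glt) :=
  Subrelation.wf (fun {_ b} hba => Nat.sub_lt_sub_left b.2.rank_lt (Glt.rank_lt hba))
    (measure fun u : {u | Glt u v} => rank v - rank u.1).wf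

theorem predecessor_lemma_paths_general {u₀ : List D × (P ⊕ O)} {U : Set (List D × (P ⊕ O))}
    (hU : IsPath u₀ U) : ∀ v ∈ U, Glt u₀ v → ∃ u ∈ U, Gsucc u v := by
  obtain ⟨hu₀, -, exists_succ, comparable⟩ := hU
  intro v hv hu₀v
  exact exists_mem_immediate_predecessor (wellFoundedOn_swap_glt v) exists_succ
    (fun w hw => comparable w hw v hv) ⟨u₀, hu₀, hu₀v⟩

theorem predecessor_lemma_paths [Fintype D] [Nonempty D] [Fintype P] [Nonempty P]
    [Fintype O] [Nonempty O]
    (u₀ : List D × (P ⊕ O)) (U : Set (List D × (P ⊕ O))) (hU : IsPath u₀ U) :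
    ∀ v ∈ U, Glt u₀ v → ∃ u ∈ U, Gsucc u v :=
  predecessor_lemma_paths_general hU

end TreeGames
end

section
/- (Predecessor Lemma for Infinite Plays) If U is an infinite play of a game from a position u₀, then every v ∈ U with u₀ ⟶⁺ v has a predecessor in U: there exists u ∈ U with u ⟶ v. -/
namespace TreeGames

variable {D P O : Type*}

/-- The edge relation of the game given by `eP`, `eO`. -/
def Edge (eP : List D × P → Set O) (eO : List D × O → Set (D × P))
    (u v : List D × (P ⊕ O)) : Prop :=
  (∃ x k l, u = (x, Sum.inl k) ∧ v = (x, Sum.inr l) ∧ l ∈ eP (x, k)) ∨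
  (∃ x l d k, u = (x, Sum.inr l) ∧ v = (x ++ [d], Sum.inl k) ∧ (d, k) ∈ eO (x, l))

/-- `U` is an infinite play of the game with edge relation `r` from `u₀`. -/
def IsPlay {α : Type*} (r : α → α → Prop) (u₀ : α) (U : Set α) : Prop :=
  u₀ ∈ U ∧ (∀ v ∈ U, Relation.ReflTransGen r u₀ v) ∧
  (∀ v ∈ U, ∃ w ∈ U, r v w) ∧
  (∀ v ∈ U, ∀ w ∈ U, Relation.TransGen r v w ∨ v = w ∨ Relation.TransGen r w v)

/-!
Every edge raises a natural-number height by exactly one. Since a play always continues, it meets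
every height from that of `u₀` upwards; since its positions are pairwise comparable, it meets each
height only once. So if `v` lies strictly above `u₀`, the play has a position `u` one level below
`v`, and the successor of `u` in the play, having the height of `v`, is `v` itself.
-/

/-- `h` is a height function for `r`: it increases by exactly one along every `r`-edge. It abstracts
the alternation of moves in a game down to counting them. -/
def IsHeight {α : Type*} (r : α → α → Prop) (h : α → ℕ) : Prop :=
  ∀ ⦃u v⦄, r u v → h v = h u + 1

section Height

variable {α : Type*} {r : α → α → Prop} {h : α → ℕ} {u₀ : α} {U : Set α}

theorem IsHeight.lt_of_transGen (hr : IsHeight r h) {u v : α} (huv : Relation.TransGen r u v) :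
    h u < h v := by
  induction huv with
  | single huv => exact hr huv ▸ Nat.lt_succ_self _
  | tail _ hvw ih => exact ih.trans (hr hvw ▸ Nat.lt_succ_self _)

theorem IsPlay.injOn_height (hU : IsPlay r u₀ U) (hr : IsHeight r h) : Set.InjOn h U := by
  obtain ⟨-, -, -, comparable⟩ := hU
  intro v hv w hw hvw
  rcases comparable v hv w hw with lt | eq | gt
  · exact absurd hvw (hr.lt_of_transGen lt).ne
  · exact eq
  · exact absurd hvw (hr.lt_of_transGen gt).ne'

theorem IsPlay.exists_height_eq (hU : IsPlay r u₀ U) (hr : IsHeight r h) {n : ℕ}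
    (hn : h u₀ ≤ n) : ∃ u ∈ U, h u = n := by
  obtain ⟨start_mem, -, exists_next, -⟩ := hU
  induction n, hn using Nat.le_induction with
  | base => exact ⟨u₀, start_mem, rfl⟩
  | succ n _ ih =>
    obtain ⟨u, hu, rfl⟩ := ih
    obtain ⟨w, hw, huw⟩ := exists_next u hu
    exact ⟨w, hw, hr huw⟩

theorem predecessor_lemma_plays_general (hr : IsHeight r h) (hU : IsPlay r u₀ U) :
    ∀ v ∈ U, Relation.TransGen r u₀ v → ∃ u ∈ U, r u v := by
  intro v hv hu₀v
  have height_lt : h u₀ < h v := hr.lt_of_transGen hu₀v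
  obtain ⟨u, hu, hu_height⟩ := hU.exists_height_eq hr (Nat.le_sub_one_of_lt height_lt)
  obtain ⟨w, hw, huw⟩ : ∃ w ∈ U, r u w := hU.2.2.1 u hu
  have same_height : h w = h v := by
    have := hr huw
    omega
  obtain rfl : w = v := hU.injOn_height hr hw hv same_height
  exact ⟨u, hu, huw⟩

end Height

/-- The height of a game position: the number of moves leading to it from a Proponent position at
the root. Each tree level accounts for two moves, one by each player. -/
def height (u : List D × (P ⊕ O)) : ℕ :=
  2 * u.1.length + Sum.elim (fun _ => 0) (fun _ => 1) u.2

theorem isHeight_edge (eP : List D × P → Set O) (eO : List D × O → Set (D × P)) :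
    IsHeight (Edge eP eO) height := by
  rintro _ _ (⟨x, k, l, rfl, rfl, -⟩ | ⟨x, l, d, k, rfl, rfl, -⟩)
  · simp [height]
  · simp [height, mul_add]

theorem predecessor_lemma_plays [Fintype D] [Nonempty D] [Fintype P] [Nonempty P]
    [Fintype O] [Nonempty O]
    (eP : List D × P → Set O) (eO : List D × O → Set (D × P))
    (hP : ∀ p, (eP p).Nonempty) (hO : ∀ p, (eO p).Nonempty)
    (u₀ : List D × (P ⊕ O)) (U : Set (List D × (P ⊕ O)))
    (hU : IsPlay (Edge eP eO) u₀ U) :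
    ∀ v ∈ U, Relation.TransGen (Edge eP eO) u₀ v → ∃ u ∈ U, Edge eP eO u v := by
  exact predecessor_lemma_plays_general (isHeight_edge eP eO) hU

end TreeGames
end

section
/- (Infinite Plays from Paths) Let U be a set of game positions and u₀ a game position such that U is a path from u₀ and for all u, v ∈ U, gsucc u v implies u ⟶ v. Then U is an infinite play of the game from u₀. -/
namespace TreeGames

variable {D P O : Type*}

/-- The level of a game position in the order `⊏`: Proponent positions at depth `n` of the tree have
level `2 * n` and Opponent positions at depth `n` level `2 * n + 1`. Differences of levels bound
the number of moves between two positions. -/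
def level (u : List D × (P ⊕ O)) : ℕ :=
  2 * u.1.length + Sum.elim (fun _ => 0) (fun _ => 1) u.2

theorem Glt.level_lt {u v : List D × (P ⊕ O)} (h : Glt u v) : level u < level v := by
  obtain ⟨x, a⟩ := u
  obtain ⟨y, b⟩ := v
  rcases h with hxy | ⟨rfl, ⟨k, rfl⟩, ⟨l, rfl⟩⟩
  · have hlen : x.length < y.length := hxy.length_lt
    cases a <;> cases b <;> simp only [level, Sum.elim_inl, Sum.elim_inr] <;> omega
  · simp [level]

theorem Gsucc.gle_of_glt {u s w : List D × (P ⊕ O)} (hus : Gsucc u s) (huw : Glt u w)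
    (hsw : Glt s w ∨ s = w ∨ Glt w s) : Gle s w := by
  rcases hsw with hsw | hsw | hws
  · exact Or.inl hsw
  · exact Or.inr hsw
  · exact absurd ⟨w, huw, hws⟩ hus.2

section Path

variable {r : List D × (P ⊕ O) → List D × (P ⊕ O) → Prop} {u₀ : List D × (P ⊕ O)}
  {U : Set (List D × (P ⊕ O))}

theorem IsPath.transGen_of_glt (hpath : IsPath u₀ U)
    (hsucc : ∀ u ∈ U, ∀ v ∈ U, Gsucc u v → r u v) {v w : List D × (P ⊕ O)}
    (hv : v ∈ U) (hw : w ∈ U) (hvw : Glt v w) : Relation.TransGen r v w := by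
  have ⟨_, _, hnext, hcomp⟩ := hpath
  obtain ⟨s, hs, hvs⟩ := hnext v hv
  have hstep : r v s := hsucc v hv s hs hvs
  rcases hvs.gle_of_glt hvw (hcomp s hs w hw) with hsw | rfl
  · exact .head hstep (hpath.transGen_of_glt hsucc hs hw hsw)
  · exact .single hstep
termination_by level w - level v
decreasing_by exact Nat.sub_lt_sub_left hvw.level_lt hvs.1.level_lt

theorem play_from_path_general (hpath : IsPath u₀ U)
    (hsucc : ∀ u ∈ U, ∀ v ∈ U, Gsucc u v → r u v) : IsPlay r u₀ U := by
  have ⟨hroot, hmin, hnext, hcomp⟩ := hpath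
  refine ⟨hroot, fun v hv => ?_, fun v hv => ?_, fun v hv w hw => ?_⟩
  · rcases hmin v hv with hlt | rfl
    · exact (hpath.transGen_of_glt hsucc hroot hv hlt).to_reflTransGen
    · exact .refl
  · obtain ⟨w, hw, hvw⟩ := hnext v hv
    exact ⟨w, hw, hsucc v hv w hw hvw⟩
  · exact (hcomp v hv w hw).imp (hpath.transGen_of_glt hsucc hv hw)
      (Or.imp_right (hpath.transGen_of_glt hsucc hw hv))

end Path

theorem play_from_path [Fintype D] [Nonempty D] [Fintype P] [Nonempty P]
    [Fintype O] [Nonempty O]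
    (eP : List D × P → Set O) (eO : List D × O → Set (D × P))
    (hP : ∀ p, (eP p).Nonempty) (hO : ∀ p, (eO p).Nonempty)
    (u₀ : List D × (P ⊕ O)) (U : Set (List D × (P ⊕ O)))
    (hpath : IsPath u₀ U)
    (hsucc : ∀ u ∈ U, ∀ v ∈ U, Gsucc u v → Edge eP eO u v) :
    IsPlay (Edge eP eO) u₀ U :=
  play_from_path_general hpath hsucc

end TreeGames
end

section
/- (Disjunction) Let A₀ and A₁ be parity automata over Σ with state sets Q₀, Q₁, initial states q₀⁰, q₀¹, and colorings c₀ : Q₀ → Fin (n₀+1), c₁ : Q₁ → Fin (n₁+1). Define the parity automaton A₀ ⊕ A₁ over Σ with states Option (Q₀ ⊕ Q₁) and initial state none; its transitions are δ (none, a) = the images of the conjunctions of δ₀ (q₀⁰, a) under (d, q) ↦ (d, some (Sum.inl q)) together with the images of the conjunctions of δ₁ (q₀¹, a) under (d, q) ↦ (d, some (Sum.inr q)), δ (some (Sum.inl q), a) = the images of δ₀ (q, a), and δ (some (Sum.inr q), a) = the images of δ₁ (q, a); its coloring sends none to max n₀ n₁, some (Sum.inl q) to c₀ q and some (Sum.inr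 q) to c₁ q. Then for every tree F : List D → Σ: F ∈ L(A₀ ⊕ A₁) if and only if F ∈ L(A₀) or F ∈ L(A₁). -/
namespace TreeGames

variable {D P O : Type*}

/-- Proponent edge function of the acceptance game `G(A,F)`:
`eP (x, q) = {(q, C) | C ∈ δ (q, F x)}`. -/
def AccEP {Q A : Type*} (δ : Q × A → Set (Set (D × Q))) (F : List D → A) :
    List D × Q → Set (Q × Set (D × Q)) :=
  fun p => {w : Q × Set (D × Q) | w.1 = p.2 ∧ w.2 ∈ δ (p.2, F p.1)}

/-- Opponent edge function of the acceptance game: `eO (x, (q, C)) = C`. -/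
def AccEO {Q : Type*} : List D × (Q × Set (D × Q)) → Set (D × Q) := fun p => p.2.2

/-- Extension of a coloring of states to game positions. -/
def HatC {Q : Type*} (c : Q → ℕ) : List D × (Q ⊕ Q × Set (D × Q)) → ℕ :=
  fun u => Sum.elim c (fun w => c w.1) u.2

/-- The parity condition on a set `U` of positions of an acceptance game. -/
def Par {Q : Type*} (c : Q → ℕ) (U : Set (List D × (Q ⊕ Q × Set (D × Q)))) : Prop :=
  ∃ m : ℕ, Even m ∧ (∀ u ∈ U, ∃ v ∈ U, Glt u v ∧ HatC c v = m) ∧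
    (∃ u ∈ U, ∀ v ∈ U, Glt u v → m ≤ HatC c v)

/-- The parity automaton with transitions `δ`, coloring `c` and initial state `q₀`
accepts the input tree `F` : there is a Proponent strategy in the acceptance game
winning from the root for the parity condition. -/
def Accepts {Q A : Type*} (δ : Q × A → Set (Set (D × Q))) (c : Q → ℕ) (q₀ : Q)
    (F : List D → A) : Prop :=
  ∃ σ : List D × Q → Q × Set (D × Q),
    (∀ p, σ p ∈ AccEP δ F p) ∧
    ∀ U : Set (List D × (Q ⊕ Q × Set (D × Q))),
      IsPlay (Edge (fun p => ({σ p} : Set (Q × Set (D × Q)))) AccEO)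
        ((([] : List D), Sum.inl q₀)) U → Par c U

/-- Well-formedness of an automaton transition function: each `δ (q, a)` is a
nonempty set of nonempty conjunctions. -/
def AutWF {Q A : Type*} (δ : Q × A → Set (Set (D × Q))) : Prop :=
  ∀ q a, (δ (q, a)).Nonempty ∧ ∀ C ∈ δ (q, a), C.Nonempty

/-- The automaton is nondeterministic: within any conjunction, each direction
determines at most one state. -/
def NonDet {Q A : Type*} (δ : Q × A → Set (Set (D × Q))) : Prop :=
  ∀ q a, ∀ C ∈ δ (q, a), ∀ d : D, ∀ q₁ q₂ : Q, (d, q₁) ∈ C → (d, q₂) ∈ C → q₁ = q₂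

/-- Image of a conjunction under a renaming of states. -/
def MapConj {Q Q' : Type*} (g : Q → Q') (C : Set (D × Q)) : Set (D × Q') :=
  (fun p : D × Q => (p.1, g p.2)) '' C

/-- The transition function of the disjunction automaton `A₀ ⊕ A₁`. -/
def SumDelta {Q₀ Q₁ Alph : Type*} (δ₀ : Q₀ × Alph → Set (Set (D × Q₀)))
    (δ₁ : Q₁ × Alph → Set (Set (D × Q₁))) (i₀ : Q₀) (i₁ : Q₁) :
    Option (Q₀ ⊕ Q₁) × Alph → Set (Set (D × Option (Q₀ ⊕ Q₁))) :=
  fun p => match p.1 with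
  | none =>
      (MapConj (fun q : Q₀ => some (Sum.inl q)) '' δ₀ (i₀, p.2)) ∪
      (MapConj (fun q : Q₁ => some (Sum.inr q)) '' δ₁ (i₁, p.2))
  | some (Sum.inl q) => MapConj (fun q' : Q₀ => some (Sum.inl q')) '' δ₀ (q, p.2)
  | some (Sum.inr q) => MapConj (fun q' : Q₁ => some (Sum.inr q')) '' δ₁ (q, p.2)

/-- The coloring of the disjunction automaton `A₀ ⊕ A₁`. -/
def SumColor {Q₀ Q₁ : Type*} (n₀ n₁ : ℕ) (c₀ : Q₀ → Fin (n₀ + 1)) (c₁ : Q₁ → Fin (n₁ + 1)) :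
    Option (Q₀ ⊕ Q₁) → ℕ :=
  fun q => match q with
  | none => max n₀ n₁
  | some (Sum.inl q) => (c₀ q : ℕ)
  | some (Sum.inr q) => (c₁ q : ℕ)

/-!
The initial state of `A₀ ⊕ A₁` offers exactly the moves of the two original initial states, and the
state at the root is visited only once, so its color is irrelevant and it may be replaced by any
state that allows the same first move. Hence `A₀ ⊕ A₁` accepts iff it accepts from one of the two
original initial states, and from there it runs inside a copy of `A₀` or of `A₁`. Both steps compare
two strategies through a map of states, possibly depending on the tree position, that sends plays
to plays and preserves colors away from the root.
-/

theorem TLt.ne_nil {x y : List D} (h : TLt x y) : y ≠ [] := by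
  rintro rfl
  exact h.2 (List.prefix_nil.1 h.1)

theorem TLt.trans {x y z : List D} (hxy : TLt x y) (hyz : TLt y z) : TLt x z := by
  refine ⟨hxy.1.trans hyz.1, ?_⟩
  rintro rfl
  exact hxy.2 (hxy.1.eq_of_length_le hyz.1.length_le)

theorem Glt.trans {u v w : List D × (P ⊕ O)} (huv : Glt u v) (hvw : Glt v w) : Glt u w := by
  rcases huv with huv | ⟨huv, -, l, hl⟩ <;> rcases hvw with hvw | ⟨hvw, ⟨k, hk⟩, -⟩
  · exact .inl (huv.trans hvw)
  · exact .inl (hvw ▸ huv)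
  · exact .inl (huv ▸ hvw)
  · cases hl.symm.trans hk

theorem Glt.ne_nil {u v : List D × (P ⊕ O)} (h : Glt u v) (hu : u.1 ≠ []) : v.1 ≠ [] := by
  rcases h with h | ⟨h, -⟩
  · exact h.ne_nil
  · exact h ▸ hu

section Edge

variable {eP : List D × P → Set O} {eO : List D × O → Set (D × P)} {u v w : List D × (P ⊕ O)}

theorem Edge.glt (h : Edge eP eO u v) : Glt u v := by
  rcases h with ⟨x, k, l, rfl, rfl, -⟩ | ⟨x, l, d, k, rfl, rfl, -⟩
  · exact .inr ⟨rfl, ⟨k, rfl⟩, ⟨l, rfl⟩⟩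
  · exact .inl ⟨x.prefix_append [d], by simp⟩

theorem Edge.ne_nil_of_edge (huv : Edge eP eO u v) (hvw : Edge eP eO v w) : w.1 ≠ [] := by
  rcases hvw with ⟨x, k, l, rfl, rfl, -⟩ | ⟨x, l, d, k, -, rfl, -⟩
  · rcases huv with ⟨_, _, _, -, h, -⟩ | ⟨y, l, d, k, -, h, -⟩
    · cases h
    · cases h
      simp
  · simp

theorem IsPlay.exists_glt_ne_nil {u₀ : List D × (P ⊕ O)} {U : Set (List D × (P ⊕ O))}
    (hU : IsPlay (Edge eP eO) u₀ U) (hu : u ∈ U) : ∃ w ∈ U, Glt u w ∧ w.1 ≠ [] := by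
  obtain ⟨-, -, hsucc, -⟩ := hU
  obtain ⟨v, hv, huv⟩ := hsucc u hu
  obtain ⟨w, hw, hvw⟩ := hsucc v hv
  exact ⟨w, hw, huv.glt.trans hvw.glt, huv.ne_nil_of_edge hvw⟩

end Edge

theorem IsPlay.image {α β : Type*} {r : α → α → Prop} {s : β → β → Prop} {f : α → β} {u₀ : α}
    {U : Set α} (hU : IsPlay r u₀ U)
    (hf : ∀ u v, Relation.ReflTransGen r u₀ u → r u v → s (f u) (f v)) :
    IsPlay s (f u₀) (f '' U) := by
  obtain ⟨hroot, hreach, hsucc, hcomp⟩ := hU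
  have map_transGen {u v : α} (hu : Relation.ReflTransGen r u₀ u) (huv : Relation.TransGen r u v) :
      Relation.TransGen s (f u) (f v) := by
    induction huv with
    | single h => exact .single (hf _ _ hu h)
    | tail huv h ih => exact ih.tail (hf _ _ (hu.trans huv.to_reflTransGen) h)
  refine ⟨Set.mem_image_of_mem f hroot, ?_, ?_, ?_⟩
  · rintro _ ⟨v, hv, rfl⟩
    rcases Relation.reflTransGen_iff_eq_or_transGen.1 (hreach v hv) with rfl | h
    · exact .refl
    · exact (map_transGen .refl h).to_reflTransGen
  · rintro _ ⟨v, hv, rfl⟩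
    obtain ⟨w, hw, hvw⟩ := hsucc v hv
    exact ⟨f w, Set.mem_image_of_mem f hw, hf v w (hreach v hv) hvw⟩
  · rintro _ ⟨v, hv, rfl⟩ _ ⟨w, hw, rfl⟩
    exact (hcomp v hv w hw).imp (map_transGen (hreach v hv))
      (Or.imp (congrArg f) (map_transGen (hreach w hw)))

theorem Par.of_image {Q S : Type*} {c : Q → ℕ} {c' : S → ℕ}
    {f : List D × (Q ⊕ Q × Set (D × Q)) → List D × (S ⊕ S × Set (D × S))}
    {U : Set (List D × (Q ⊕ Q × Set (D × Q)))}
    (hfar : ∀ u ∈ U, ∃ w ∈ U, Glt u w ∧ w.1 ≠ [])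
    (hf : ∀ u v, Glt (f u) (f v) ↔ Glt u v)
    (hc : ∀ u ∈ U, u.1 ≠ [] → HatC c' (f u) = HatC c u)
    (h : Par c' (f '' U)) : Par c U := by
  obtain ⟨m, hm, hinf, _, ⟨b, hb, rfl⟩, hmin⟩ := h
  refine ⟨m, hm, fun u hu => ?_, ?_⟩
  · obtain ⟨w, hw, huw, hne⟩ := hfar u hu
    obtain ⟨_, ⟨v, hv, rfl⟩, hwv, rfl⟩ := hinf _ ⟨w, hw, rfl⟩
    rw [hf] at hwv
    exact ⟨v, hv, huw.trans hwv, (hc v hv (hwv.ne_nil hne)).symm⟩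
  · obtain ⟨w, hw, hbw, hne⟩ := hfar b hb
    refine ⟨w, hw, fun v hv hwv => ?_⟩
    rw [← hc v hv (hwv.ne_nil hne)]
    exact hmin _ ⟨v, hv, rfl⟩ ((hf b v).2 (hbw.trans hwv))

/-- A choice of Opponent label at every Proponent position of an acceptance game. That the choice is
legal is a separate hypothesis `∀ p, σ p ∈ AccEP δ F p`. -/
abbrev Strategy (D Q : Type*) := List D × Q → Q × Set (D × Q)

namespace Strategy

variable {Q S : Type*}

/-- The edge relation of the acceptance game restricted to the strategy `σ`. -/
abbrev RestrictedEdge (σ : Strategy D Q) :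
    List D × (Q ⊕ Q × Set (D × Q)) → List D × (Q ⊕ Q × Set (D × Q)) → Prop :=
  Edge (fun p => {σ p}) AccEO

/-- The strategy `σ` is winning from the root in state `i` for the parity condition of `c`. -/
def IsWinning (σ : Strategy D Q) (c : Q → ℕ) (i : Q) : Prop :=
  ∀ U, IsPlay σ.RestrictedEdge ([], Sum.inl i) U → Par c U

/-- The Proponent position `(x, q)` occurs in some play, possibly finite, that starts at the root in
state `i` and follows `σ`. -/
inductive Reachable (σ : Strategy D Q) (i : Q) : List D → Q → Prop
  | root : Reachable σ i [] i
  | step {x : List D} {q : Q} {d : D} {q' : Q} :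
      Reachable σ i x q → (d, q') ∈ (σ (x, q)).2 → Reachable σ i (x ++ [d]) q'

theorem Reachable.eq_of_nil {σ : Strategy D Q} {i q : Q} (h : Reachable σ i [] q) : q = i := by
  generalize hx : ([] : List D) = x at h
  cases h with
  | root => rfl
  | step => simp at hx

theorem Reachable.mem_of_closed {σ : Strategy D Q} {i q : Q} {x : List D} {T : Set Q}
    (h : Reachable σ i x q) (hi : i ∈ T)
    (hT : ∀ x, ∀ q ∈ T, ∀ d q', (d, q') ∈ (σ (x, q)).2 → q' ∈ T) : q ∈ T := by
  induction h with
  | root => exact hi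
  | step _ hmem ih => exact hT _ _ ih _ _ hmem

theorem exists_reachable_of_reflTransGen {σ : Strategy D Q} {i : Q}
    {u : List D × (Q ⊕ Q × Set (D × Q))}
    (h : Relation.ReflTransGen σ.RestrictedEdge ([], Sum.inl i) u) :
    ∃ x q, σ.Reachable i x q ∧ (u = (x, Sum.inl q) ∨ u = (x, Sum.inr (σ (x, q)))) := by
  induction h with
  | refl => exact ⟨[], i, .root, .inl rfl⟩
  | tail _ hedge ih =>
    obtain ⟨x, q, hq, rfl | rfl⟩ := ih <;>
      rcases hedge with ⟨y, k, l, hu, rfl, hl⟩ | ⟨y, l, d, k, hu, rfl, hk⟩ <;> cases hu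
    · exact ⟨x, q, hq, .inr (by rw [Set.mem_singleton_iff.1 hl])⟩
    · exact ⟨x ++ [d], k, hq.step hk, .inl rfl⟩

/-- The map of game positions induced by the map `g` of states, where Opponent positions of the
target are those chosen by `τ`. -/
def mapPosition (τ : Strategy D S) (g : List D → Q → S)
    (u : List D × (Q ⊕ Q × Set (D × Q))) : List D × (S ⊕ S × Set (D × S)) :=
  (u.1, u.2.map (g u.1) fun w => τ (u.1, g u.1 w.1))

theorem glt_mapPosition_iff (τ : Strategy D S) (g : List D → Q → S)
    (u v : List D × (Q ⊕ Q × Set (D × Q))) :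
    Glt (τ.mapPosition g u) (τ.mapPosition g v) ↔ Glt u v := by
  obtain ⟨x, a | a⟩ := u <;> obtain ⟨y, b | b⟩ := v <;> simp [mapPosition, Glt]

section Simulation

variable {σ : Strategy D Q} {τ : Strategy D S} {g : List D → Q → S} {i : Q}

theorem restrictedEdge_mapPosition (hσ : ∀ p, (σ p).1 = p.2)
    (hstep : ∀ x q d q', σ.Reachable i x q → (d, q') ∈ (σ (x, q)).2 →
      (d, g (x ++ [d]) q') ∈ (τ (x, g x q)).2)
    {u v : List D × (Q ⊕ Q × Set (D × Q))}
    (hu : Relation.ReflTransGen σ.RestrictedEdge ([], Sum.inl i) u)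
    (huv : σ.RestrictedEdge u v) :
    τ.RestrictedEdge (τ.mapPosition g u) (τ.mapPosition g v) := by
  obtain ⟨x, q, hq, rfl | rfl⟩ := exists_reachable_of_reflTransGen hu <;>
    rcases huv with ⟨y, k, l, hu', rfl, hl⟩ | ⟨y, l, d, k, hu', rfl, hk⟩ <;> cases hu'
  · obtain rfl := Set.mem_singleton_iff.1 hl
    exact .inl ⟨x, g x q, τ (x, g x q), rfl, by simp [mapPosition, hσ], rfl⟩
  · exact .inr ⟨x, τ (x, g x q), d, g (x ++ [d]) k, by simp [mapPosition, hσ], rfl,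
      hstep x q d k hq hk⟩

theorem hatC_mapPosition {c : Q → ℕ} {c' : S → ℕ} (hσ : ∀ p, (σ p).1 = p.2)
    (hτ : ∀ p, (τ p).1 = p.2)
    (hc : ∀ x q, σ.Reachable i x q → x ≠ [] → c' (g x q) = c q)
    {u : List D × (Q ⊕ Q × Set (D × Q))}
    (hu : Relation.ReflTransGen σ.RestrictedEdge ([], Sum.inl i) u) (hne : u.1 ≠ []) :
    HatC c' (τ.mapPosition g u) = HatC c u := by
  obtain ⟨x, q, hq, rfl | rfl⟩ := exists_reachable_of_reflTransGen hu <;>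
    simpa [HatC, mapPosition, hσ, hτ] using hc x q hq hne

theorem IsWinning.of_simulation {c : Q → ℕ} {c' : S → ℕ} (hσ : ∀ p, (σ p).1 = p.2)
    (hτ : ∀ p, (τ p).1 = p.2)
    (hstep : ∀ x q d q', σ.Reachable i x q → (d, q') ∈ (σ (x, q)).2 →
      (d, g (x ++ [d]) q') ∈ (τ (x, g x q)).2)
    (hc : ∀ x q, σ.Reachable i x q → x ≠ [] → c' (g x q) = c q)
    (h : τ.IsWinning c' (g [] i)) : σ.IsWinning c i := by
  intro U hU
  have hplay : IsPlay τ.RestrictedEdge ([], Sum.inl (g [] i)) (τ.mapPosition g '' U) :=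
    hU.image fun _ _ => restrictedEdge_mapPosition hσ hstep
  exact (h _ hplay).of_image (fun _ => hU.exists_glt_ne_nil) (glt_mapPosition_iff τ g)
    fun u hu => hatC_mapPosition hσ hτ hc (hU.2.1 u hu)

end Simulation

end Strategy

section RootMove

variable {Q Alph : Type*} {δ : Q × Alph → Set (Set (D × Q))} {c : Q → ℕ} {F : List D → Alph}

theorem Strategy.IsWinning.accepts_of_root_move {σ : Strategy D Q} {i i' : Q}
    (hwin : σ.IsWinning c i) (hσ : ∀ p, σ p ∈ AccEP δ F p)
    (hmove : (σ ([], i)).2 ∈ δ (i', F [])) : Accepts δ c i' F := by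
  classical
  let τ : Strategy D Q := Function.update σ ([], i') (i', (σ ([], i)).2)
  have hτ : ∀ p, τ p ∈ AccEP δ F p := by
    intro p
    rcases eq_or_ne p ([], i') with rfl | hp
    · simpa [τ, AccEP] using hmove
    · simpa [τ, hp] using hσ p
  refine ⟨τ, hτ, Strategy.IsWinning.of_simulation (τ := σ)
    (g := fun x q => if x = [] then i else q) (fun p => (hτ p).1) (fun p => (hσ p).1) ?_ ?_
    (by simpa using hwin)⟩
  · intro x q d q' hq hmem
    rcases eq_or_ne x [] with rfl | hx
    · obtain rfl := hq.eq_of_nil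
      simpa [τ] using hmem
    · simpa [τ, hx] using hmem
  · intro x q _ hx
    simp [hx]

theorem accepts_iff_or_of_eq_union {i i₀ i₁ : Q}
    (h : δ (i, F []) = δ (i₀, F []) ∪ δ (i₁, F [])) :
    Accepts δ c i F ↔ Accepts δ c i₀ F ∨ Accepts δ c i₁ F := by
  constructor
  · rintro ⟨σ, hσ, hwin⟩
    have hmove : (σ ([], i)).2 ∈ δ (i, F []) := (hσ ([], i)).2
    rw [h] at hmove
    exact hmove.imp (Strategy.IsWinning.accepts_of_root_move hwin hσ)
      (Strategy.IsWinning.accepts_of_root_move hwin hσ)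
  · rintro (⟨σ, hσ, hwin⟩ | ⟨σ, hσ, hwin⟩) <;>
      refine Strategy.IsWinning.accepts_of_root_move hwin hσ ?_ <;> rw [h]
    · exact .inl (hσ ([], i₀)).2
    · exact .inr (hσ ([], i₁)).2

end RootMove

section Embedding

variable {Q S Alph : Type*} {δ : Q × Alph → Set (Set (D × Q))} {Δ : S × Alph → Set (Set (D × S))}
  {c : S → ℕ} {e : Q → S} {i : Q} {F : List D → Alph}

theorem mem_mapConj {C : Set (D × Q)} {d : D} {s : S} :
    (d, s) ∈ MapConj e C ↔ ∃ q, (d, q) ∈ C ∧ e q = s := by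
  simp [MapConj]

theorem Accepts.of_map (hΔ : ∀ q a, Δ (e q, a) ⊆ MapConj e '' δ (q, a))
    (h : Accepts Δ c (e i) F) : Accepts δ (c ∘ e) i F := by
  obtain ⟨τ, hτ, hwin⟩ := h
  choose C hCδ hC using fun p : List D × Q => hΔ p.2 (F p.1) (hτ (p.1, e p.2)).2
  refine ⟨fun p => (p.2, C p), fun p => ⟨rfl, hCδ p⟩, Strategy.IsWinning.of_simulation (τ := τ)
    (g := fun _ => e) (fun _ => rfl) (fun p => (hτ p).1) (fun x q d q' _ hmem => ?_)
    (fun _ _ _ _ => rfl) hwin⟩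
  rw [← hC (x, q)]
  exact mem_mapConj.2 ⟨q', hmem, rfl⟩

theorem Accepts.map (he : Function.Injective e) (hΔ : ∀ q a, MapConj e '' δ (q, a) ⊆ Δ (e q, a))
    (hne : ∀ s a, (Δ (s, a)).Nonempty) (h : Accepts δ (c ∘ e) i F) : Accepts Δ c (e i) F := by
  obtain ⟨σ, hσ, hwin⟩ := h
  have exists_move : ∀ p : List D × S,
      ∃ C ∈ Δ (p.2, F p.1), ∀ q, e q = p.2 → C = MapConj e (σ (p.1, q)).2 := by
    rintro ⟨x, s⟩
    by_cases hs : s ∈ Set.range e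
    · obtain ⟨q, rfl⟩ := hs
      exact ⟨_, hΔ q (F x) ⟨_, (hσ (x, q)).2, rfl⟩, fun q' hq' => by rw [he hq']⟩
    · obtain ⟨C, hC⟩ := hne s (F x)
      exact ⟨C, hC, fun q hq => absurd ⟨q, hq⟩ hs⟩
  choose C hCΔ hC using exists_move
  let τ : Strategy D S := fun p => (p.2, C p)
  have hτ : ∀ x q, (τ (x, e q)).2 = MapConj e (σ (x, q)).2 := fun x q => hC (x, e q) q rfl
  have mem_range : ∀ x s, τ.Reachable (e i) x s → s ∈ Set.range e := fun x s hs => by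
    refine hs.mem_of_closed ⟨i, rfl⟩ ?_
    rintro y _ ⟨q, rfl⟩ d s' hmem
    rw [hτ] at hmem
    obtain ⟨q', -, hq'⟩ := mem_mapConj.1 hmem
    exact ⟨q', hq'⟩
  have : Nonempty Q := ⟨i⟩
  have inv_e : ∀ q, Function.invFun e (e q) = q := Function.leftInverse_invFun he
  refine ⟨τ, fun p => ⟨rfl, hCΔ p⟩, Strategy.IsWinning.of_simulation (τ := σ)
    (g := fun _ => Function.invFun e) (fun _ => rfl) (fun p => (hσ p).1) ?_ ?_
    (by rw [inv_e]; exact hwin)⟩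
  · intro x s d s' hs hmem
    obtain ⟨q, rfl⟩ := mem_range x s hs
    rw [hτ] at hmem
    obtain ⟨q', hq', rfl⟩ := mem_mapConj.1 hmem
    simpa only [inv_e] using hq'
  · intro x s hs _
    obtain ⟨q, rfl⟩ := mem_range x s hs
    simp only [Function.comp_apply, inv_e]

theorem accepts_map_iff (he : Function.Injective e)
    (hΔ : ∀ q a, Δ (e q, a) = MapConj e '' δ (q, a)) (hne : ∀ s a, (Δ (s, a)).Nonempty) :
    Accepts Δ c (e i) F ↔ Accepts δ (c ∘ e) i F :=
  ⟨.of_map fun q a => (hΔ q a).subset, .map he (fun q a => (hΔ q a).superset) hne⟩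

end Embedding

theorem sumDelta_nonempty {Alph Q₀ Q₁ : Type*} {δ₀ : Q₀ × Alph → Set (Set (D × Q₀))}
    {δ₁ : Q₁ × Alph → Set (Set (D × Q₁))} (i₀ : Q₀) (i₁ : Q₁)
    (h₀ : ∀ q a, (δ₀ (q, a)).Nonempty) (h₁ : ∀ q a, (δ₁ (q, a)).Nonempty)
    (s : Option (Q₀ ⊕ Q₁)) (a : Alph) : (SumDelta δ₀ δ₁ i₀ i₁ (s, a)).Nonempty := by
  rcases s with _ | q | q
  · exact ((h₀ i₀ a).image _).inl
  · exact (h₀ q a).image _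
  · exact (h₁ q a).image _

theorem disjunction_general {Alph Q₀ Q₁ : Type*} (δ₀ : Q₀ × Alph → Set (Set (D × Q₀)))
    (δ₁ : Q₁ × Alph → Set (Set (D × Q₁))) (i₀ : Q₀) (i₁ : Q₁) (c : Option (Q₀ ⊕ Q₁) → ℕ)
    (h₀ : ∀ q a, (δ₀ (q, a)).Nonempty) (h₁ : ∀ q a, (δ₁ (q, a)).Nonempty) (F : List D → Alph) :
    Accepts (SumDelta δ₀ δ₁ i₀ i₁) c none F ↔
      Accepts δ₀ (fun q => c (some (Sum.inl q))) i₀ F ∨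
        Accepts δ₁ (fun q => c (some (Sum.inr q))) i₁ F := by
  have hne := sumDelta_nonempty i₀ i₁ h₀ h₁
  have hroot : Accepts (SumDelta δ₀ δ₁ i₀ i₁) c none F ↔
      Accepts (SumDelta δ₀ δ₁ i₀ i₁) c (some (Sum.inl i₀)) F ∨
        Accepts (SumDelta δ₀ δ₁ i₀ i₁) c (some (Sum.inr i₁)) F :=
    accepts_iff_or_of_eq_union rfl
  exact hroot.trans <| or_congr
    (accepts_map_iff ((Option.some_injective _).comp Sum.inl_injective) (fun _ _ => rfl) hne)
    (accepts_map_iff ((Option.some_injective _).comp Sum.inr_injective) (fun _ _ => rfl) hne)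

theorem disjunction {Alph Q₀ Q₁ : Type*} [Fintype D] [Nonempty D]
    [Fintype Alph] [Nonempty Alph] [Fintype Q₀] [Nonempty Q₀] [Fintype Q₁] [Nonempty Q₁]
    (n₀ n₁ : ℕ)
    (δ₀ : Q₀ × Alph → Set (Set (D × Q₀))) (δ₁ : Q₁ × Alph → Set (Set (D × Q₁)))
    (i₀ : Q₀) (i₁ : Q₁) (c₀ : Q₀ → Fin (n₀ + 1)) (c₁ : Q₁ → Fin (n₁ + 1))
    (h₀ : AutWF δ₀) (h₁ : AutWF δ₁) (F : List D → Alph) :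
    Accepts (SumDelta δ₀ δ₁ i₀ i₁) (SumColor n₀ n₁ c₀ c₁) (none : Option (Q₀ ⊕ Q₁)) F ↔
      Accepts δ₀ (fun q => (c₀ q : ℕ)) i₀ F ∨ Accepts δ₁ (fun q => (c₁ q : ℕ)) i₁ F := by
  exact disjunction_general δ₀ δ₁ i₀ i₁ (SumColor n₀ n₁ c₀ c₁) (fun q a => (h₀ q a).1)
    (fun q a => (h₁ q a).1) F

end TreeGames
end

section
/- (Unique states along plays of nondeterministic automata) Let A be a nondeterministic alternating tree automaton over Σ, let F : List D → Σ, and let σ be a Proponent strategy in the acceptance game G(A,F). Then for every tree position x : List D there is at most one state q : Q such that some infinite play of the σ-restricted game from ([], q₀) contains the position (x, Sum.inl q). -/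
namespace TreeGames

variable {D P O : Type*}

/-!
Forget the labels of game positions, keeping only the tree position and whose turn it is. The
resulting shapes form a tree, so two positions of equal shape have predecessors of equal shape.
Once Proponent follows a strategy and every conjunction it picks holds at most one state per
direction, a reachable position has at most one successor of each shape. By induction along the
path, a reachable position is determined by its shape.
-/

section Reachability

open Relation

variable {α β : Type*} {r : α → α → Prop} {π : α → β} {u₀ : α}

theorem injOn_reachable (hroot : ∀ v, TransGen r u₀ v → π u₀ ≠ π v)
    (hpred : ∀ {u v u' v'}, r u v → r u' v' → π v = π v' → π u = π u')
    (hsucc : ∀ {u v v'}, ReflTransGen r u₀ u → r u v → r u v' → π v = π v' → v = v') :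
    Set.InjOn π {v | ReflTransGen r u₀ v} := by
  intro v hv
  induction hv with
  | refl =>
    intro v' hv' hπ
    rcases reflTransGen_iff_eq_or_transGen.mp hv' with rfl | hv'
    · rfl
    · exact absurd hπ (hroot v' hv')
  | tail hu huv ih =>
    intro v' hv' hπ
    rcases ReflTransGen.cases_tail hv' with rfl | ⟨u', hu', huv'⟩
    · exact absurd hπ.symm (hroot _ (TransGen.tail' hu huv))
    · obtain rfl := ih hu' (hpred huv huv' hπ)
      exact hsucc hu huv huv' hπ

end Reachability

section Game

open Relation

/-- The shape of a game position: its tree position together with whose turn it is (`true` for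
Opponent), forgetting the label. -/
def shape (u : List D × (P ⊕ O)) : List D × Bool := (u.1, u.2.isRight)

/-- The number of moves from the Proponent positions at the root to the positions of shape `s`:
two moves, one by each player, per tree level. -/
def depth (s : List D × Bool) : ℕ := 2 * s.1.length + s.2.toNat

variable {eP : List D × P → Set O} {eO : List D × O → Set (D × P)} {u v v' : List D × (P ⊕ O)}

theorem Edge.depth_shape_lt (h : Edge eP eO u v) : depth (shape u) < depth (shape v) := by
  rcases h with ⟨x, k, l, rfl, rfl, -⟩ | ⟨x, l, d, k, rfl, rfl, -⟩
  · simp [depth, shape]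
  · simp [depth, shape, mul_add]

theorem depth_shape_lt_of_transGen (h : TransGen (Edge eP eO) u v) :
    depth (shape u) < depth (shape v) := by
  induction h with
  | single h => exact h.depth_shape_lt
  | tail _ h ih => exact ih.trans h.depth_shape_lt

theorem Edge.shape_eq_of_shape_eq {u' : List D × (P ⊕ O)} (h : Edge eP eO u v)
    (h' : Edge eP eO u' v') (hvv' : shape v = shape v') : shape u = shape u' := by
  rcases h with ⟨x, k, l, rfl, rfl, -⟩ | ⟨x, l, d, k, rfl, rfl, -⟩ <;>
    rcases h' with ⟨x', k', l', rfl, rfl, -⟩ | ⟨x', l', d', k', rfl, rfl, -⟩ <;>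
    simp_all [shape]

theorem Edge.eq_of_shape_eq (hP : ∀ p, (eP p).Subsingleton)
    (hO : ∀ x l, u = (x, Sum.inr l) → Set.InjOn Prod.fst (eO (x, l)))
    (h : Edge eP eO u v) (h' : Edge eP eO u v') (hvv' : shape v = shape v') : v = v' := by
  rcases h with ⟨x, k, l, rfl, rfl, hl⟩ | ⟨x, l, d, k, rfl, rfl, hk⟩
  · rcases h' with ⟨_, _, l', ⟨⟩, rfl, hl'⟩ | ⟨_, _, _, _, ⟨⟩, _, _⟩
    rw [hP _ hl hl']
  · rcases h' with ⟨_, _, _, ⟨⟩, _, _⟩ | ⟨_, _, d', k', ⟨⟩, rfl, hk'⟩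
    have hd : d = d' := by simpa [shape] using hvv'
    obtain ⟨rfl, rfl⟩ := Prod.ext_iff.mp (hO x l rfl hk hk' hd)
    rfl

theorem exists_mem_of_reachable_inr {x₀ x : List D} {k₀ : P} {l : O}
    (h : ReflTransGen (Edge eP eO) (x₀, Sum.inl k₀) (x, Sum.inr l)) : ∃ k, l ∈ eP (x, k) := by
  rcases ReflTransGen.cases_tail h with heq | ⟨_, -, hlast⟩
  · cases heq
  · rcases hlast with ⟨_, k, _, -, ⟨⟩, hl⟩ | ⟨_, _, _, _, -, ⟨⟩, -⟩
    exact ⟨k, hl⟩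

theorem injOn_shape_reachable (hP : ∀ p, (eP p).Subsingleton)
    (hO : ∀ x k, ∀ l ∈ eP (x, k), Set.InjOn Prod.fst (eO (x, l))) (x₀ : List D) (k₀ : P) :
    Set.InjOn shape {v | ReflTransGen (Edge eP eO) (x₀, Sum.inl k₀) v} := by
  refine injOn_reachable (fun v hv hshape => ?_) Edge.shape_eq_of_shape_eq
    (fun hu => Edge.eq_of_shape_eq hP ?_)
  · exact (depth_shape_lt_of_transGen hv).ne (congrArg depth hshape)
  · rintro x l rfl
    obtain ⟨k, hl⟩ := exists_mem_of_reachable_inr hu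
    exact hO x k l hl

end Game

theorem NonDet.injOn_fst {Alph Q : Type*} {δ : Q × Alph → Set (Set (D × Q))} (hnd : NonDet δ)
    {q : Q} {a : Alph} {C : Set (D × Q)} (hC : C ∈ δ (q, a)) : Set.InjOn Prod.fst C := by
  rintro ⟨d, q₁⟩ h₁ ⟨_, q₂⟩ h₂ rfl
  rw [hnd q a C hC d q₁ q₂ h₁ h₂]

theorem nondeterministic_unique_state_general {Alph Q : Type*}
    {δ : Q × Alph → Set (Set (D × Q))} (hnd : NonDet δ) {F : List D → Alph}
    {σ : List D × Q → Q × Set (D × Q)} (hσ : ∀ p, σ p ∈ AccEP δ F p)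
    {x₀ x : List D} {q₀ q q' : Q}
    (h : Relation.ReflTransGen (Edge (fun p => {σ p}) AccEO) (x₀, Sum.inl q₀) (x, Sum.inl q))
    (h' : Relation.ReflTransGen (Edge (fun p => {σ p}) AccEO) (x₀, Sum.inl q₀) (x, Sum.inl q')) :
    q = q' := by
  have hinj := injOn_shape_reachable (eP := fun p => {σ p}) (eO := AccEO)
    (fun _ => Set.subsingleton_singleton)
    (by rintro y p _ rfl; exact hnd.injOn_fst (hσ (y, p)).2) x₀ q₀
  simpa using hinj h h' rfl

theorem nondeterministic_unique_state {Alph Q : Type*} [Fintype D] [Nonempty D]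
    [Fintype Alph] [Nonempty Alph] [Fintype Q] [Nonempty Q]
    (δ : Q × Alph → Set (Set (D × Q))) (q₀ : Q)
    (hA : AutWF δ) (hnd : NonDet δ) (F : List D → Alph)
    (σ : List D × Q → Q × Set (D × Q)) (hσ : ∀ p, σ p ∈ AccEP δ F p)
    (x : List D) (q q' : Q)
    (h : ∃ U : Set (List D × (Q ⊕ Q × Set (D × Q))),
      IsPlay (Edge (fun p => ({σ p} : Set (Q × Set (D × Q)))) AccEO)
        ((([] : List D), Sum.inl q₀)) U ∧ (x, Sum.inl q) ∈ U)
    (h' : ∃ U : Set (List D × (Q ⊕ Q × Set (D × Q))),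
      IsPlay (Edge (fun p => ({σ p} : Set (Q × Set (D × Q)))) AccEO)
        ((([] : List D), Sum.inl q₀)) U ∧ (x, Sum.inl q') ∈ U) :
    q = q' := by
  obtain ⟨_, hU, hq⟩ := h
  obtain ⟨_, hU', hq'⟩ := h'
  exact nondeterministic_unique_state_general hnd hσ (hU.2.1 _ hq) (hU'.2.1 _ hq')

end TreeGames
end

section
/- (Projection) Let A be a nondeterministic parity automaton over the product alphabet Σ × Γ (with Σ, Γ nonempty finite). Define the parity automaton ∃_Γ A over Σ with the same states, initial state and coloring as A, and transitions δ' (q, a) = ⋃ over b : Γ of δ_A (q, (a, b)). Then for every tree F : List D → Σ: F ∈ L(∃_Γ A) if and only if there exists G : List D → Γ with (fun x => (F x, G x)) ∈ L(A). -/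
namespace TreeGames

variable {D P O : Type*}

/-!
Nondeterminism means that, once the strategy of Proponent is fixed, every tree position `x` is
visited in at most one state. The letter `b` witnessing the strategy's choice at `x` therefore
depends on `x` alone, and these letters form the tree `G`. Away from the visited positions the
strategy need not be legal for `(F, G)`; redefining it there does not change its plays.
-/

theorem edge_inl_right_iff {eP : List D × P → Set O} {eO : List D × O → Set (D × P)}
    {u : List D × (P ⊕ O)} {x : List D} {k : P} :
    Edge eP eO u (x, Sum.inl k) ↔
      ∃ y l d, u = (y, Sum.inr l) ∧ x = y ++ [d] ∧ (d, k) ∈ eO (y, l) := by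
  grind [Edge]

theorem edge_inr_right_iff {eP : List D × P → Set O} {eO : List D × O → Set (D × P)}
    {u : List D × (P ⊕ O)} {x : List D} {l : O} :
    Edge eP eO u (x, Sum.inr l) ↔ ∃ k, u = (x, Sum.inl k) ∧ l ∈ eP (x, k) := by
  grind [Edge]

section Plays

variable {α : Type*} {r s : α → α → Prop} {u₀ : α}

theorem transGen_of_imp_on_reachable
    (himp : ∀ v w, Relation.ReflTransGen s u₀ v → r v w → s v w) {v w : α}
    (hv : Relation.ReflTransGen s u₀ v) (hvw : Relation.TransGen r v w) :
    Relation.TransGen s v w := by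
  induction hvw with
  | single hstep => exact .single (himp _ _ hv hstep)
  | tail _ hstep ih => exact ih.tail (himp _ _ (hv.trans ih.to_reflTransGen) hstep)

theorem IsPlay.of_imp_on_reachable {U : Set α} (hU : IsPlay r u₀ U)
    (himp : ∀ v w, Relation.ReflTransGen s u₀ v → r v w → s v w) : IsPlay s u₀ U := by
  obtain ⟨hroot, hreach, hnext, hcomp⟩ := hU
  have hreach' : ∀ v ∈ U, Relation.ReflTransGen s u₀ v := fun v hv => by
    obtain rfl | hpath := Relation.reflTransGen_iff_eq_or_transGen.1 (hreach v hv)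
    · exact .refl
    · exact (transGen_of_imp_on_reachable himp .refl hpath).to_reflTransGen
  refine ⟨hroot, hreach', fun v hv => ?_, fun v hv w hw => ?_⟩
  · obtain ⟨w, hw, hvw⟩ := hnext v hv
    exact ⟨w, hw, himp v w (hreach' v hv) hvw⟩
  · exact (hcomp v hv w hw).imp (transGen_of_imp_on_reachable himp (hreach' v hv))
      (Or.imp_right (transGen_of_imp_on_reachable himp (hreach' w hw)))

end Plays

section Strategies

/-- The edge relation of the game restricted to the Proponent strategy `σ`. Legality of `σ` is
not built in. -/
def StrategyEdge (eO : List D × O → Set (D × P)) (σ : List D × P → O) :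
    List D × (P ⊕ O) → List D × (P ⊕ O) → Prop :=
  Edge (fun p => {σ p}) eO

/-- `v` can be reached from `u₀` when Proponent follows `σ`. -/
def Reachable (eO : List D × O → Set (D × P)) (σ : List D × P → O)
    (u₀ v : List D × (P ⊕ O)) : Prop :=
  Relation.ReflTransGen (StrategyEdge eO σ) u₀ v

/-- Proponent has a positional strategy winning from `u₀` for an arbitrary winning condition
`Win` on sets of positions. -/
def HasWinningStrategy (eP : List D × P → Set O) (eO : List D × O → Set (D × P))
    (Win : Set (List D × (P ⊕ O)) → Prop) (u₀ : List D × (P ⊕ O)) : Prop :=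
  ∃ σ : List D × P → O, (∀ p, σ p ∈ eP p) ∧
    ∀ U, IsPlay (StrategyEdge eO σ) u₀ U → Win U

variable {eP eP' : List D × P → Set O} {eO : List D × O → Set (D × P)}
  {σ τ : List D × P → O} {u₀ : List D × (P ⊕ O)} {Win : Set (List D × (P ⊕ O)) → Prop}

theorem reachable_nil_inl {k₀ k : P} (h : Reachable eO σ ([], Sum.inl k₀) ([], Sum.inl k)) :
    k = k₀ := by
  obtain heq | ⟨_, _, hedge⟩ := Relation.ReflTransGen.cases_tail h
  · simpa using heq
  · obtain ⟨_, _, _, _, hnil, _⟩ := edge_inl_right_iff.1 hedge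
    simp at hnil

theorem exists_reachable_of_reachable_append {k₀ k : P} {x : List D} {d : D}
    (h : Reachable eO σ ([], Sum.inl k₀) (x ++ [d], Sum.inl k)) :
    ∃ j, Reachable eO σ ([], Sum.inl k₀) (x, Sum.inl j) ∧ (d, k) ∈ eO (x, σ (x, j)) := by
  obtain heq | ⟨_, hreach, hedge⟩ := Relation.ReflTransGen.cases_tail h
  · simp at heq
  obtain ⟨y, l, e, rfl, hxy, hmem⟩ := edge_inl_right_iff.1 hedge
  obtain ⟨rfl, rfl⟩ : x = y ∧ d = e := by simpa using hxy
  obtain heq | ⟨_, hreach', hedge'⟩ := Relation.ReflTransGen.cases_tail hreach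
  · simp at heq
  obtain ⟨j, rfl, rfl⟩ := edge_inr_right_iff.1 hedge'
  exact ⟨j, hreach', hmem⟩

theorem subsingleton_reachable_inl {k₀ : P}
    (hσ : ∀ x k d k₁ k₂, (d, k₁) ∈ eO (x, σ (x, k)) → (d, k₂) ∈ eO (x, σ (x, k)) → k₁ = k₂)
    (x : List D) : {k | Reachable eO σ ([], Sum.inl k₀) (x, Sum.inl k)}.Subsingleton := by
  induction x using List.reverseRecOn with
  | nil => exact fun _ h₁ _ h₂ => (reachable_nil_inl h₁).trans (reachable_nil_inl h₂).symm
  | append_singleton x d ih =>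
    intro k₁ h₁ k₂ h₂
    obtain ⟨j₁, hj₁, hk₁⟩ := exists_reachable_of_reachable_append h₁
    obtain ⟨j₂, hj₂, hk₂⟩ := exists_reachable_of_reachable_append h₂
    obtain rfl : j₁ = j₂ := ih hj₁ hj₂
    exact hσ x j₁ d k₁ k₂ hk₁ hk₂

theorem IsPlay.of_strategy_eq_on_reachable {U : Set (List D × (P ⊕ O))}
    (hU : IsPlay (StrategyEdge eO τ) u₀ U)
    (heq : ∀ x k, Reachable eO σ u₀ (x, Sum.inl k) → τ (x, k) = σ (x, k)) :
    IsPlay (StrategyEdge eO σ) u₀ U := by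
  refine hU.of_imp_on_reachable ?_
  rintro v w hv (⟨x, k, l, rfl, rfl, hl⟩ | hopponent)
  · exact .inl ⟨x, k, l, rfl, rfl, hl.trans (heq x k hv)⟩
  · exact .inr hopponent

theorem hasWinningStrategy_of_legal_on_reachable (hne : ∀ p, (eP p).Nonempty)
    (hlegal : ∀ x k, Reachable eO σ u₀ (x, Sum.inl k) → σ (x, k) ∈ eP (x, k))
    (hwin : ∀ U, IsPlay (StrategyEdge eO σ) u₀ U → Win U) :
    HasWinningStrategy eP eO Win u₀ := by
  classical
  let τ : List D × P → O := fun p =>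
    if Reachable eO σ u₀ (p.1, Sum.inl p.2) then σ p else (hne p).some
  refine ⟨τ, fun p => ?_, fun U hU => hwin U (hU.of_strategy_eq_on_reachable ?_)⟩
  · by_cases hp : Reachable eO σ u₀ (p.1, Sum.inl p.2)
    · simpa only [τ, if_pos hp] using hlegal p.1 p.2 hp
    · simpa only [τ, if_neg hp] using (hne p).some_mem
  · exact fun x k hreach => if_pos hreach

theorem HasWinningStrategy.mono (h : HasWinningStrategy eP eO Win u₀)
    (hsub : ∀ p, eP p ⊆ eP' p) : HasWinningStrategy eP' eO Win u₀ := by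
  obtain ⟨σ, hσ, hwin⟩ := h
  exact ⟨σ, fun p => hsub p (hσ p), hwin⟩

end Strategies

section Projection

variable {Alph Gam Q : Type*} {δ : Q × (Alph × Gam) → Set (Set (D × Q))} {F : List D → Alph}

/-- The transition function of the projected automaton `∃_Γ A`, which guesses the `Gam`-letter. -/
def projTransition (δ : Q × (Alph × Gam) → Set (Set (D × Q))) :
    Q × Alph → Set (Set (D × Q)) :=
  fun p => ⋃ b : Gam, δ (p.1, (p.2, b))

theorem mem_accEP_projTransition_iff {p : List D × Q} {w : Q × Set (D × Q)} :
    w ∈ AccEP (projTransition δ) F p ↔ ∃ b, w.1 = p.2 ∧ w.2 ∈ δ (p.2, (F p.1, b)) := by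
  simp [AccEP, projTransition]

theorem NonDet.projTransition (hδ : NonDet δ) : NonDet (projTransition δ) := by
  intro q a C hC
  obtain ⟨b, hb⟩ := Set.mem_iUnion.1 hC
  exact hδ q (a, b) C hb

theorem NonDet.subsingleton_reachable {A : Type*} {δ : Q × A → Set (Set (D × Q))}
    {F : List D → A} {σ : List D × Q → Q × Set (D × Q)} (hδ : NonDet δ)
    (hσ : ∀ p, σ p ∈ AccEP δ F p) (q₀ : Q) (x : List D) :
    {q | Reachable AccEO σ ([], Sum.inl q₀) (x, Sum.inl q)}.Subsingleton :=
  subsingleton_reachable_inl (fun y q => hδ q (F y) _ (hσ (y, q)).2) x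

theorem exists_labelling_of_strategy_projTransition {σ : List D × Q → Q × Set (D × Q)}
    (hδ : NonDet δ) (hσ : ∀ p, σ p ∈ AccEP (projTransition δ) F p) (q₀ : Q) :
    ∃ G : List D → Gam, ∀ x q, Reachable AccEO σ ([], Sum.inl q₀) (x, Sum.inl q) →
      σ (x, q) ∈ AccEP δ (fun y => (F y, G y)) (x, q) := by
  choose letter hletter using fun p => mem_accEP_projTransition_iff.1 (hσ p)
  have hstate : ∀ x, ∃ q, ∀ q', Reachable AccEO σ ([], Sum.inl q₀) (x, Sum.inl q') → q' = q := by
    intro x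
    have hsub := hδ.projTransition.subsingleton_reachable hσ q₀ x
    by_cases hx : ∃ q, Reachable AccEO σ ([], Sum.inl q₀) (x, Sum.inl q)
    · obtain ⟨q, hq⟩ := hx
      exact ⟨q, fun _ hq' => hsub hq' hq⟩
    · exact ⟨q₀, fun q' hq' => (hx ⟨q', hq'⟩).elim⟩
  choose state hstate using hstate
  refine ⟨fun x => letter (x, state x), fun x q hq => ?_⟩
  obtain rfl := hstate x q hq
  exact hletter (x, state x)

theorem projection_general (hA : AutWF δ) (hnd : NonDet δ) (F : List D → Alph)
    (Win : Set (List D × (Q ⊕ Q × Set (D × Q))) → Prop) (q₀ : Q) :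
    HasWinningStrategy (AccEP (projTransition δ) F) AccEO Win ([], Sum.inl q₀) ↔
      ∃ G : List D → Gam,
        HasWinningStrategy (AccEP δ fun x => (F x, G x)) AccEO Win ([], Sum.inl q₀) := by
  constructor
  · rintro ⟨σ, hσ, hwin⟩
    obtain ⟨G, hG⟩ := exists_labelling_of_strategy_projTransition hnd hσ q₀
    have hne : ∀ p, (AccEP δ (fun x => (F x, G x)) p).Nonempty := fun p =>
      (hA p.2 (F p.1, G p.1)).1.imp' (Prod.mk p.2) fun _ hC => ⟨rfl, hC⟩
    exact ⟨G, hasWinningStrategy_of_legal_on_reachable hne hG hwin⟩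
  · rintro ⟨G, hG⟩
    exact hG.mono fun p w hw => mem_accEP_projTransition_iff.2 ⟨G p.1, hw⟩

end Projection

theorem projection {Alph Gam Q : Type*} [Fintype D] [Nonempty D]
    [Fintype Alph] [Nonempty Alph] [Fintype Gam] [Nonempty Gam]
    [Fintype Q] [Nonempty Q]
    (δ : Q × (Alph × Gam) → Set (Set (D × Q))) (c : Q → ℕ) (q₀ : Q)
    (hA : AutWF δ) (hnd : NonDet δ) (F : List D → Alph) :
    Accepts (fun p => ⋃ b : Gam, δ (p.1, (p.2, b))) c q₀ F ↔
      ∃ G : List D → Gam, Accepts δ c q₀ (fun x => (F x, G x)) :=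
  projection_general hA hnd F (Par c) q₀

end TreeGames
end
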